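/- Let Q be an n×n real matrix with entrywise nonnegative entries whose spectral radius satisfies ϑ(Q) < 1, let Λ be an entrywise nonnegative vector in ℝ^n, and let (x_t)_{t≥0} be a sequence of entrywise nonnegative vectors in ℝ^n satisfying x_t ≤ Λ + Q x_{t−1} entrywise for all t ≥ 1. Then I − Q is invertible and for every component j, limsup_{t→∞} (x_t)_j ≤ ((I − Q)^{−1} Λ)_j; consequently, for every entrywise nonnegative vector π ∈ ℝ^n, limsup_{t→∞} ⟨π, x_t⟩ ≤ πᵀ (I − Q)^{−1} Λ. -/

import Mathlib

open Filter Matrix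

/-!
Gelfand's formula turns `ϑ(Q) < 1` into `Qᵗ → 0`. Hence some power of `Q` has norm below `1`, and
`1 - Q`, which divides `1 - Qᵗ`, is invertible. The vector `s = (1 - Q)⁻¹ Λ` is the fixed point of
`v ↦ Λ + Q v`. Since `Q` is monotone, iterating the recursion gives `x_t ≤ s + Qᵗ (x_0 - s)`,
whose right-hand side converges to `s`.
-/

open scoped Topology

section BanachAlgebra

variable {A : Type*} [NormedRing A]

theorem isTopologicallyNilpotent_of_spectralRadius_lt_one [NormedAlgebra ℂ A] [CompleteSpace A]
    {a : A} (ha : spectralRadius ℂ a < 1) : IsTopologicallyNilpotent a := by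
  obtain ⟨q, hρq, hq⟩ := ENNReal.lt_iff_exists_nnreal_btwn.mp ha
  have hgelfand : ∀ᶠ t : ℕ in atTop, (‖a ^ t‖₊ : ENNReal) ^ (1 / t : ℝ) < q :=
    (spectrum.pow_nnnorm_pow_one_div_tendsto_nhds_spectralRadius a).eventually_lt_const hρq
  have hnorm : ∀ᶠ t : ℕ in atTop, ‖a ^ t‖ ≤ (q : ℝ) ^ t := by
    filter_upwards [hgelfand, eventually_gt_atTop 0] with t hroot ht
    have hpow : (‖a ^ t‖₊ : ENNReal) ≤ (q : ENNReal) ^ t := by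
      rw [one_div, ENNReal.rpow_inv_lt_iff (by exact_mod_cast ht), ENNReal.rpow_natCast] at hroot
      exact hroot.le
    exact_mod_cast hpow
  exact squeeze_zero_norm' hnorm
    (tendsto_pow_atTop_nhds_zero_of_lt_one q.coe_nonneg (by exact_mod_cast hq))

theorem isUnit_one_sub_of_isTopologicallyNilpotent [HasSummableGeomSeries A] {a : A}
    (ha : IsTopologicallyNilpotent a) : IsUnit (1 - a) := by
  obtain ⟨t, ht⟩ := ha.exists_pow_mem_of_mem_nhds (Metric.ball_mem_nhds 0 one_pos)
  have hunit : IsUnit (1 - a ^ t) := isUnit_one_sub_of_norm_lt_one (mem_ball_zero_iff.mp ht)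
  have hcomm : Commute (1 - a) (∑ i ∈ Finset.range t, a ^ i) :=
    (mul_neg_geom_sum a t).trans (geom_sum_mul_neg a t).symm
  rw [← mul_neg_geom_sum a t, hcomm.isUnit_mul_iff] at hunit
  exact hunit.1

end BanachAlgebra

section Matrix

variable {ι : Type*} [Fintype ι]

theorem monotone_mulVec_of_nonneg {κ R : Type*} [Semiring R] [PartialOrder R] [IsOrderedRing R]
    {Q : Matrix κ ι R} (hQ : ∀ i j, 0 ≤ Q i j) : Monotone (Q *ᵥ ·) :=
  fun _ _ huv i => dotProduct_le_dotProduct_of_nonneg_left huv (hQ i)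

variable [DecidableEq ι]

open scoped Matrix.Norms.Operator in
theorem isTopologicallyNilpotent_of_spectralRadius_map_ofReal_lt_one {Q : Matrix ι ι ℝ}
    (hQ : spectralRadius ℂ (Q.map Complex.ofReal) < 1) : IsTopologicallyNilpotent Q := by
  have hQℂ : IsTopologicallyNilpotent (Q.map Complex.ofReal) :=
    isTopologicallyNilpotent_of_spectralRadius_lt_one hQ
  have hemb : Topology.IsEmbedding fun M : Matrix ι ι ℝ => M.map Complex.ofReal :=
    Complex.isometry_ofReal.isEmbedding.matrix_map
  have hmap_pow (t : ℕ) : (Q ^ t).map Complex.ofReal = Q.map Complex.ofReal ^ t :=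
    Matrix.map_pow Q Complex.ofRealHom t
  refine hemb.tendsto_nhds_iff.mpr ?_
  simpa [IsTopologicallyNilpotent, Function.comp_def, hmap_pow] using hQℂ

open scoped Matrix.Norms.Operator in
theorem isUnit_one_sub_matrix_of_isTopologicallyNilpotent {R : Type*} [NormedRing R]
    [CompleteSpace R] {Q : Matrix ι ι R} (hQ : IsTopologicallyNilpotent Q) : IsUnit (1 - Q) :=
  -- Instance search does not unfold the operator-norm uniformity to the product uniformity.
  have : @CompleteSpace (Matrix ι ι R) PseudoMetricSpace.toUniformSpace :=
    Matrix.instCompleteSpace ι ι R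
  isUnit_one_sub_of_isTopologicallyNilpotent hQ

theorem tendsto_pow_mulVec_of_isTopologicallyNilpotent {R : Type*} [Semiring R]
    [TopologicalSpace R] [ContinuousAdd R] [ContinuousMul R] {Q : Matrix ι ι R}
    (hQ : IsTopologicallyNilpotent Q) (v : ι → R) :
    Tendsto (fun t : ℕ => Q ^ t *ᵥ v) atTop (𝓝 0) := by
  have hcont : Continuous fun M : Matrix ι ι R => M *ᵥ v :=
    continuous_id.matrix_mulVec continuous_const
  simpa using! (hcont.tendsto 0).comp hQ

theorem add_mulVec_one_sub_inv_mulVec {R : Type*} [CommRing R] {Q : Matrix ι ι R}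
    (hQ : IsUnit (1 - Q)) (c : ι → R) : c + Q *ᵥ ((1 - Q)⁻¹ *ᵥ c) = (1 - Q)⁻¹ *ᵥ c := by
  have hsolve : (1 - Q) *ᵥ ((1 - Q)⁻¹ *ᵥ c) = c := by
    rw [mulVec_mulVec, mul_nonsing_inv _ ((isUnit_iff_isUnit_det _).mp hQ), one_mulVec]
  rw [sub_mulVec, one_mulVec] at hsolve
  exact (sub_eq_iff_eq_add.mp hsolve).symm

theorem le_add_pow_mulVec_of_le_add_mulVec {R : Type*} [Ring R] [PartialOrder R]
    [IsOrderedRing R] {Q : Matrix ι ι R} (hQ : ∀ i j, 0 ≤ Q i j) {c s : ι → R}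
    (hs : c + Q *ᵥ s = s) {x : ℕ → ι → R} (hx : ∀ t, x (t + 1) ≤ c + Q *ᵥ x t) (t : ℕ) :
    x t ≤ s + Q ^ t *ᵥ (x 0 - s) := by
  induction t with
  | zero => simp
  | succ t ih =>
    calc x (t + 1) ≤ c + Q *ᵥ x t := hx t
      _ ≤ c + Q *ᵥ (s + Q ^ t *ᵥ (x 0 - s)) :=
        add_le_add_right (monotone_mulVec_of_nonneg hQ ih) c
      _ = s + Q ^ (t + 1) *ᵥ (x 0 - s) := by
        rw [mulVec_add, mulVec_mulVec, ← pow_succ', ← add_assoc, hs]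

end Matrix

section Limsup

variable {α : Type*} {l : Filter α} [l.NeBot]

theorem limsup_le_of_eventuallyLE_of_tendsto {β : Type*} [ConditionallyCompleteLinearOrder β]
    [TopologicalSpace β] [OrderTopology β] {u v : α → β} {b : β} (huv : u ≤ᶠ[l] v)
    (hv : Tendsto v l (𝓝 b)) (hu : l.IsCoboundedUnder (· ≤ ·) u) : limsup u l ≤ b :=
  (limsup_le_limsup huv hu hv.isBoundedUnder_le).trans_eq hv.limsup_eq

theorem limsup_dotProduct_le_of_eventuallyLE_of_tendsto {ι : Type*} [Fintype ι]
    {x y : α → ι → ℝ} {s π : ι → ℝ} (hxy : x ≤ᶠ[l] y) (hy : Tendsto y l (𝓝 s))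
    (hx : l.IsBoundedUnder (· ≥ ·) x) (hπ : 0 ≤ π) :
    limsup (fun t => π ⬝ᵥ x t) l ≤ π ⬝ᵥ s := by
  have hmono : Monotone (π ⬝ᵥ ·) := fun _ _ huv =>
    dotProduct_le_dotProduct_of_nonneg_left huv hπ
  have hcont : Continuous (π ⬝ᵥ ·) := continuous_const.dotProduct continuous_id
  have hbdd : l.IsBoundedUnder (· ≥ ·) fun t => π ⬝ᵥ x t :=
    let ⟨b, hb⟩ := hx
    ⟨π ⬝ᵥ b, hb.mono fun _ h => hmono h⟩
  exact limsup_le_of_eventuallyLE_of_tendsto (hxy.mono fun _ h => hmono h)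
    ((hcont.tendsto s).comp hy) hbdd.isCoboundedUnder_le

end Limsup

theorem asymptotic_stability_bound_general {ι : Type*} [Fintype ι] [DecidableEq ι]
    {Q : Matrix ι ι ℝ} (hQnonneg : ∀ i j, 0 ≤ Q i j)
    (hQ : spectralRadius ℂ (Q.map Complex.ofReal) < 1) {Λ : ι → ℝ} {x : ℕ → ι → ℝ}
    (hx : BddBelow (Set.range x)) (hrec : ∀ t, x (t + 1) ≤ Λ + Q *ᵥ x t) :
    IsUnit (1 - Q) ∧
      (∀ j, limsup (fun t => x t j) atTop ≤ ((1 - Q)⁻¹ *ᵥ Λ) j) ∧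
      (∀ π : ι → ℝ, 0 ≤ π →
        limsup (fun t => π ⬝ᵥ x t) atTop ≤ π ⬝ᵥ (1 - Q)⁻¹ *ᵥ Λ) := by
  have hnil := isTopologicallyNilpotent_of_spectralRadius_map_ofReal_lt_one hQ
  have hunit := isUnit_one_sub_matrix_of_isTopologicallyNilpotent hnil
  have hbound := le_add_pow_mulVec_of_le_add_mulVec hQnonneg
    (add_mulVec_one_sub_inv_mulVec hunit Λ) hrec
  set s := (1 - Q)⁻¹ *ᵥ Λ
  have hlim : Tendsto (fun t => s + Q ^ t *ᵥ (x 0 - s)) atTop (𝓝 s) := by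
    simpa using (tendsto_pow_mulVec_of_isTopologicallyNilpotent hnil (x 0 - s)).const_add s
  have hdot (π : ι → ℝ) (hπ : 0 ≤ π) : limsup (fun t => π ⬝ᵥ x t) atTop ≤ π ⬝ᵥ s :=
    limsup_dotProduct_le_of_eventuallyLE_of_tendsto (.of_forall hbound) hlim
      hx.isBoundedUnder_of_range hπ
  refine ⟨hunit, fun j => ?_, hdot⟩
  simpa using hdot (Pi.single j 1) (Pi.single_nonneg.mpr zero_le_one)

/-- Abstract core of Theorem 1 of the paper: if `Q` is an entrywise nonnegative real
matrix with spectral radius `< 1`, `Λ` is entrywise nonnegative, and the entrywise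
nonnegative vectors `x_t` satisfy the entrywise recursion `x_t ≤ Λ + Q x_{t-1}`, then
`I - Q` is invertible, `limsup_t (x_t)_j ≤ ((I - Q)⁻¹ Λ)_j` for every component `j`, and
for every entrywise nonnegative `π`, `limsup_t ⟨π, x_t⟩ ≤ πᵀ (I - Q)⁻¹ Λ`. -/
theorem asymptotic_stability_bound {n : ℕ}
    (Q : Matrix (Fin n) (Fin n) ℝ) (hQnonneg : ∀ i j, 0 ≤ Q i j)
    (hQ : spectralRadius ℂ (Q.map Complex.ofReal) < 1)
    (Λ : Fin n → ℝ) (hΛ : ∀ j, 0 ≤ Λ j)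
    (x : ℕ → Fin n → ℝ) (hx : ∀ t j, 0 ≤ x t j)
    (hrec : ∀ t : ℕ, 1 ≤ t → ∀ j, x t j ≤ (Λ + Q.mulVec (x (t - 1))) j) :
    IsUnit (1 - Q) ∧
      (∀ j, limsup (fun t : ℕ => x t j) atTop ≤ (1 - Q)⁻¹.mulVec Λ j) ∧
      (∀ π : Fin n → ℝ, (∀ j, 0 ≤ π j) →
        limsup (fun t : ℕ => π ⬝ᵥ x t) atTop ≤ π ⬝ᵥ (1 - Q)⁻¹.mulVec Λ) :=
  asymptotic_stability_bound_general hQnonneg hQ ⟨0, Set.forall_mem_range.mpr hx⟩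
    fun t => hrec (t + 1) t.succ_pos
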